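/- (Nominal stability of piecewise LTV systems.) Let n, N ∈ ℕ, let t₀ < t₁ < ⋯ < t_N be reals, let A₀,…,A_N be real n×n matrices, and γ_k = 1/(t_k − t_{k−1}). Define 𝒜(t) = A₀ for t ≤ t₀, 𝒜(t) = A_N for t ≥ t_N, and 𝒜(t) = α_k(t)A_k + (1−α_k(t))A_{k−1} for t ∈ [t_{k−1}, t_k] with α_k(t) = (t − t_{k−1})/(t_k − t_{k−1}). Suppose there exist symmetric positive definite n×n matrices P₀,…,P_N, reals ε₀,…,ε_N > 0 with P₀A₀ + A₀ᵀP₀ + ε₀P₀ ≺ 0 and P_N A_N + A_NᵀP_N + ε_N P_N ≺ 0, and for each k ∈ {1,…,N} a symmetric positive definite n×n matrix Ψ_k such that the 2n×2n block matrix with (1,1)-block M_{2,k} − Ψ_k, (1,2)-block M_{1,k} + (1/2)Ψ_k, (2,1)-block (M_{1,k} + (1/2)Ψ_k)ᵀ, and (2,2)-block M_{0,k} is negative definite, where M_{2,k} = ⟨P_kA_k − (P_kA_{k−1} + P_{k−1}A_k) + P_{k−1}A_{k−1}⟩_S, M_{1,k} = ⟨(1/2)(P_kA_{k−1} + P_{k−1}A_k)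 − P_{k−1}A_{k−1}⟩_S + (ε_k/2)(P_k − P_{k−1}), and M_{0,k} = ⟨P_{k−1}A_{k−1}⟩_S + γ_k(P_k − P_{k−1}) + ε_k P_{k−1}. Then the piecewise LTV system ẋ = 𝒜(t)x is globally uniformly exponentially stable: there exist constants c ≥ 1 and λ > 0 such that every differentiable x : ℝ → ℝⁿ with x′(t) = 𝒜(t)·x(t) for all t satisfies ‖x(t)‖ ≤ c·e^{−λ(t−s)}·‖x(s)‖ for all s ≤ t. -/

import Mathlib

/-!
The proof uses the time-varying Lyapunov function `V(s) = x(s)ᵀ P(s) x(s)`, where `P` interpolates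
the matrices `P k` with the same weights as `Amat` interpolates the `A k`.  On `[t (k-1), t k]` put
`α` for the interpolation weight.  Testing the block inequality on the vector `(α v, v)` gives
`vᵀ (P' + P 𝒜 + 𝒜ᵀ P + ε P) v + α (1 - α) vᵀ Ψ v ≤ 0`, and since `0 ≤ α ≤ 1` the last summand is
nonnegative, so `V' ≤ - ε V` there.  On the two unbounded end intervals `P` is constant and the
same inequality is the hypothesis at the end point.

On each interval `exp (ε s) V(s)` is therefore antitone, and comparing `V` with the Euclidean norm
(`exists_quadForm_bounds`) gives an exponential estimate there (`ExpDecayOn.of_lyapunov`).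
Estimates on adjacent intervals compose (`ExpDecayOn.union`): the constants multiply and the
smaller rate survives.  Since there are finitely many intervals, this covers the whole line.
-/

open Matrix

/-- Symmetrization `⟨X⟩_S = X + Xᵀ`. -/
def symS {n : ℕ} (X : Matrix (Fin n) (Fin n) ℝ) : Matrix (Fin n) (Fin n) ℝ := X + Xᵀ

/-! ### Exponential decay on a set of times -/

/-- Solutions of `x' = Amat s x` decay exponentially along the set `S` of times, in the Euclidean
norm, with a constant and a rate that do not depend on the solution. The solutions themselves are
global; only the two times compared are restricted to `S`. -/
def ExpDecayOn {n : ℕ} (Amat : ℝ → Matrix (Fin n) (Fin n) ℝ) (S : Set ℝ) : Prop :=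
  ∃ c lam : ℝ, 1 ≤ c ∧ 0 < lam ∧
    ∀ x : ℝ → Fin n → ℝ,
      (∀ s, HasDerivAt x ((Amat s).mulVec (x s)) s) →
      ∀ s ∈ S, ∀ u ∈ S, s ≤ u →
        Real.sqrt (x u ⬝ᵥ x u) ≤
          c * Real.exp (-lam * (u - s)) * Real.sqrt (x s ⬝ᵥ x s)

/-- Estimates on two sets of times that meet at a common point `a` separating them compose. -/
lemma ExpDecayOn.union {n : ℕ} {Amat : ℝ → Matrix (Fin n) (Fin n) ℝ} {S T : Set ℝ} {a : ℝ}
    (hS : ExpDecayOn Amat S) (hT : ExpDecayOn Amat T) (haS : a ∈ S) (haT : a ∈ T)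
    (hSa : S ⊆ Set.Iic a) (hTa : T ⊆ Set.Ici a) : ExpDecayOn Amat (S ∪ T) := by
  obtain ⟨c, l, hc, hl, h⟩ := hS
  obtain ⟨d, m, hd, hm, h'⟩ := hT
  have key : ∀ r : ℝ, min l m ≤ r → ∀ w : ℝ, 0 ≤ w →
      Real.exp (-r * w) ≤ Real.exp (-(min l m) * w) := fun r hr w hw =>
    Real.exp_le_exp.2 (by nlinarith)
  have hcd : c ≤ c * d := le_mul_of_one_le_right (by linarith) hd
  have hdc : d ≤ c * d := le_mul_of_one_le_left (by linarith) hc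
  refine ⟨c * d, min l m, by linarith, lt_min hl hm, fun x hx s hs u hu hsu => ?_⟩
  have hns := Real.sqrt_nonneg (x s ⬝ᵥ x s)
  have caseS : s ∈ S → u ∈ S → Real.sqrt (x u ⬝ᵥ x u) ≤
      c * d * Real.exp (-(min l m) * (u - s)) * Real.sqrt (x s ⬝ᵥ x s) := fun hs hu =>
    (h x hx s hs u hu hsu).trans (by
      gcongr ?_ * ?_ * _
      exact key l (min_le_left _ _) _ (by linarith))
  have caseT : s ∈ T → u ∈ T → Real.sqrt (x u ⬝ᵥ x u) ≤
      c * d * Real.exp (-(min l m) * (u - s)) * Real.sqrt (x s ⬝ᵥ x s) := fun hs hu =>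
    (h' x hx s hs u hu hsu).trans (by
      gcongr ?_ * ?_ * _
      exact key m (min_le_right _ _) _ (by linarith))
  rcases hs with hs | hs <;> rcases hu with hu | hu
  · exact caseS hs hu
  · have hsa : s ≤ a := hSa hs
    have hau : a ≤ u := hTa hu
    have hexp : Real.exp (-(min l m) * (u - s)) =
        Real.exp (-(min l m) * (u - a)) * Real.exp (-(min l m) * (a - s)) := by
      rw [← Real.exp_add]; congr 1; ring
    calc Real.sqrt (x u ⬝ᵥ x u)
        ≤ d * Real.exp (-m * (u - a)) * Real.sqrt (x a ⬝ᵥ x a) := h' x hx a haT u hu hau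
      _ ≤ d * Real.exp (-m * (u - a)) *
          (c * Real.exp (-l * (a - s)) * Real.sqrt (x s ⬝ᵥ x s)) := by
          gcongr
          exact h x hx s hs a haS hsa
      _ ≤ d * Real.exp (-(min l m) * (u - a)) *
          (c * Real.exp (-(min l m) * (a - s)) * Real.sqrt (x s ⬝ᵥ x s)) := by
          gcongr d * ?_ * (c * ?_ * _)
          · exact key m (min_le_right _ _) _ (by linarith)
          · exact key l (min_le_left _ _) _ (by linarith)
      _ = _ := by rw [hexp]; ring
  · -- here `u ≤ a ≤ s ≤ u`, so both times are `a`
    have hsa : s = a := le_antisymm (hsu.trans (hSa hu)) (hTa hs)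
    exact caseS (hsa ▸ haS) hu
  · exact caseT hs hu

/-! ### Quadratic forms -/

lemma dotProduct_self_pos {n : ℕ} {v : Fin n → ℝ} (hv : v ≠ 0) : 0 < v ⬝ᵥ v :=
  lt_of_le_of_ne (Finset.sum_nonneg fun i _ => mul_self_nonneg (v i))
    fun h => hv (dotProduct_self_eq_zero.1 h.symm)

/-- A positive definite quadratic form is comparable with the square of the Euclidean norm. The
bounds are its extreme values on the unit sphere, which is compact. -/
lemma exists_quadForm_bounds {n : ℕ} (Q : Matrix (Fin n) (Fin n) ℝ)
    (hQ : ∀ v : Fin n → ℝ, v ≠ 0 → 0 < v ⬝ᵥ Q.mulVec v) :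
    ∃ m M : ℝ, 0 < m ∧ 0 < M ∧ ∀ v : Fin n → ℝ,
      m * (v ⬝ᵥ v) ≤ v ⬝ᵥ Q.mulVec v ∧ v ⬝ᵥ Q.mulVec v ≤ M * (v ⬝ᵥ v) := by
  set K : Set (Fin n → ℝ) := {v | v ⬝ᵥ v = 1}
  have hcq : Continuous fun v : Fin n → ℝ => v ⬝ᵥ Q.mulVec v := by fun_prop
  have hK : IsCompact K := by
    refine Metric.isCompact_of_isClosed_isBounded
      (isClosed_eq (by fun_prop) continuous_const) ?_
    refine (Metric.isBounded_closedBall (x := (0 : Fin n → ℝ)) (r := 1)).subset fun v hv => ?_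
    rw [mem_closedBall_zero_iff, pi_norm_le_iff_of_nonneg zero_le_one]
    intro i
    have h1 : v i * v i ≤ v ⬝ᵥ v :=
      Finset.single_le_sum (f := fun i => v i * v i) (fun i _ => mul_self_nonneg (v i))
        (Finset.mem_univ i)
    have h2 : v ⬝ᵥ v = 1 := hv
    rw [Real.norm_eq_abs]
    exact abs_le_one_iff_mul_self_le_one.2 (by linarith)
  have hnorm : ∀ v : Fin n → ℝ, v ≠ 0 → ∃ w ∈ K, ∃ r : ℝ, v = r • w ∧ v ⬝ᵥ v = r * r := by
    intro v hv
    have h := dotProduct_self_pos hv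
    have hr : Real.sqrt (v ⬝ᵥ v) ≠ 0 := (Real.sqrt_pos.2 h).ne'
    have hrr : Real.sqrt (v ⬝ᵥ v) * Real.sqrt (v ⬝ᵥ v) = v ⬝ᵥ v := Real.mul_self_sqrt h.le
    refine ⟨(Real.sqrt (v ⬝ᵥ v))⁻¹ • v, ?_, Real.sqrt (v ⬝ᵥ v), ?_, hrr.symm⟩
    · change _ = _
      rw [smul_dotProduct, dotProduct_smul, smul_eq_mul, smul_eq_mul, ← mul_assoc, ← mul_inv, hrr]
      exact inv_mul_cancel₀ h.ne'
    · rw [smul_smul, mul_inv_cancel₀ hr, one_smul]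
  by_cases hne : K.Nonempty
  · obtain ⟨a, ha, hmin⟩ := hK.exists_isMinOn hne hcq.continuousOn
    obtain ⟨b, hb, hmax⟩ := hK.exists_isMaxOn hne hcq.continuousOn
    have hK0 : ∀ w ∈ K, w ≠ 0 := by
      rintro w hw rfl
      have : (0 : Fin n → ℝ) ⬝ᵥ 0 = 1 := hw
      simp at this
    refine ⟨_, _, hQ a (hK0 a ha), hQ b (hK0 b hb), fun v => ?_⟩
    by_cases hv : v = 0
    · simp [hv]
    obtain ⟨w, hw, r, hvr, hvv⟩ := hnorm v hv
    have h1 : a ⬝ᵥ Q.mulVec a ≤ w ⬝ᵥ Q.mulVec w := hmin hw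
    have h2 : w ⬝ᵥ Q.mulVec w ≤ b ⬝ᵥ Q.mulVec b := hmax hw
    have h3 : v ⬝ᵥ Q.mulVec v = (w ⬝ᵥ Q.mulVec w) * (r * r) := by
      rw [hvr, mulVec_smul, smul_dotProduct, dotProduct_smul, smul_eq_mul, smul_eq_mul]; ring
    rw [h3, hvv]
    exact ⟨by gcongr; exact mul_self_nonneg r, by gcongr; exact mul_self_nonneg r⟩
  · -- an empty sphere means that `0` is the only vector (`n = 0`)
    refine ⟨1, 1, one_pos, one_pos, fun v => ?_⟩
    by_cases hv : v = 0
    · simp [hv]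
    · obtain ⟨w, hw, -⟩ := hnorm v hv
      exact (hne ⟨w, hw⟩).elim

lemma HasDerivAt.quadForm {n : ℕ} {Q : Matrix (Fin n) (Fin n) ℝ} (hQ : Q.IsSymm)
    {x : ℝ → Fin n → ℝ} {x' : Fin n → ℝ} {s : ℝ} (hx : HasDerivAt x x' s) :
    HasDerivAt (fun r => x r ⬝ᵥ Q.mulVec (x r)) (2 * (x s ⬝ᵥ Q.mulVec x')) s := by
  have hc : ∀ i, HasDerivAt (fun r => x r i) (x' i) s := hasDerivAt_pi.1 hx
  have hm : ∀ i, HasDerivAt (fun r => Q.mulVec (x r) i) (Q.mulVec x' i) s := fun i => by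
    simp only [mulVec, dotProduct]
    exact HasDerivAt.fun_sum fun j _ => (hc j).const_mul _
  have h : HasDerivAt (fun r => x r ⬝ᵥ Q.mulVec (x r))
      (∑ i, (x' i * Q.mulVec (x s) i + x s i * Q.mulVec x' i)) s := by
    simp only [dotProduct]
    exact HasDerivAt.fun_sum fun i _ => (hc i).mul (hm i)
  convert h using 1
  rw [Finset.sum_add_distrib]
  change _ = x' ⬝ᵥ Q.mulVec (x s) + x s ⬝ᵥ Q.mulVec x'
  have : x' ⬝ᵥ Q.mulVec (x s) = x s ⬝ᵥ Q.mulVec x' := by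
    rw [dotProduct_mulVec, ← mulVec_transpose, hQ.eq, dotProduct_comm]
  rw [this]; ring

/-! ### Lyapunov estimates on an interval -/

/-- Lyapunov's argument on one interval, for `V(s) = x(s)ᵀ (α(s) P₁ + (1 - α(s)) P₀) x(s)` with a
weight `α` of slope `γ`: the hypothesis `hV` says that `V' ≤ - ε V` along solutions. -/
lemma ExpDecayOn.of_lyapunov {n : ℕ} {Amat : ℝ → Matrix (Fin n) (Fin n) ℝ} {S : Set ℝ}
    (hS : Convex ℝ S) {P₀ P₁ : Matrix (Fin n) (Fin n) ℝ} (hs₀ : P₀.IsSymm) (hs₁ : P₁.IsSymm)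
    (hp₀ : ∀ v : Fin n → ℝ, v ≠ 0 → 0 < v ⬝ᵥ P₀.mulVec v)
    (hp₁ : ∀ v : Fin n → ℝ, v ≠ 0 → 0 < v ⬝ᵥ P₁.mulVec v)
    {α : ℝ → ℝ} {γ ε : ℝ} (hε : 0 < ε) (hα : ∀ s, HasDerivAt α γ s)
    (hα01 : ∀ s ∈ S, 0 ≤ α s ∧ α s ≤ 1)
    (hV : ∀ s ∈ S, ∀ v : Fin n → ℝ,
      γ * (v ⬝ᵥ P₁.mulVec v - v ⬝ᵥ P₀.mulVec v)
        + 2 * (α s * (v ⬝ᵥ P₁.mulVec ((Amat s).mulVec v))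
          + (1 - α s) * (v ⬝ᵥ P₀.mulVec ((Amat s).mulVec v)))
        + ε * (α s * (v ⬝ᵥ P₁.mulVec v) + (1 - α s) * (v ⬝ᵥ P₀.mulVec v)) ≤ 0) :
    ExpDecayOn Amat S := by
  obtain ⟨m₀, M₀, hm₀, hM₀, hb₀⟩ := exists_quadForm_bounds P₀ hp₀
  obtain ⟨m₁, M₁, hm₁, hM₁, hb₁⟩ := exists_quadForm_bounds P₁ hp₁
  set m := min m₀ m₁ with hm
  set M := max M₀ M₁ with hM
  have hmpos : 0 < m := lt_min hm₀ hm₁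
  have hMpos : 0 < M := lt_max_of_lt_left hM₀
  refine ⟨max 1 (Real.sqrt (M / m)), ε / 2, le_max_left _ _, by positivity,
    fun x hx s hs u hu hsu => ?_⟩
  set V : ℝ → ℝ := fun r =>
    α r * (x r ⬝ᵥ P₁.mulVec (x r)) + (1 - α r) * (x r ⬝ᵥ P₀.mulVec (x r)) with hVdef
  have hnn : ∀ v : Fin n → ℝ, 0 ≤ v ⬝ᵥ v := fun v =>
    Finset.sum_nonneg fun i _ => mul_self_nonneg (v i)
  have hlow : ∀ r ∈ S, m * (x r ⬝ᵥ x r) ≤ V r := by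
    intro r hr
    obtain ⟨h0, h1⟩ := hα01 r hr
    have e1 : m * (x r ⬝ᵥ x r) ≤ x r ⬝ᵥ P₁.mulVec (x r) :=
      (mul_le_mul_of_nonneg_right (min_le_right _ _) (hnn _)).trans (hb₁ _).1
    have e0 : m * (x r ⬝ᵥ x r) ≤ x r ⬝ᵥ P₀.mulVec (x r) :=
      (mul_le_mul_of_nonneg_right (min_le_left _ _) (hnn _)).trans (hb₀ _).1
    have := mul_le_mul_of_nonneg_left e1 h0
    have := mul_le_mul_of_nonneg_left e0 (sub_nonneg.2 h1)
    simp only [hVdef]; linarith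
  have hup : ∀ r ∈ S, V r ≤ M * (x r ⬝ᵥ x r) := by
    intro r hr
    obtain ⟨h0, h1⟩ := hα01 r hr
    have e1 : x r ⬝ᵥ P₁.mulVec (x r) ≤ M * (x r ⬝ᵥ x r) :=
      (hb₁ _).2.trans (mul_le_mul_of_nonneg_right (le_max_right _ _) (hnn _))
    have e0 : x r ⬝ᵥ P₀.mulVec (x r) ≤ M * (x r ⬝ᵥ x r) :=
      (hb₀ _).2.trans (mul_le_mul_of_nonneg_right (le_max_left _ _) (hnn _))
    have := mul_le_mul_of_nonneg_left e1 h0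
    have := mul_le_mul_of_nonneg_left e0 (sub_nonneg.2 h1)
    simp only [hVdef]; linarith
  have hderiv : ∀ r, HasDerivAt (fun r => Real.exp (ε * r) * V r) (Real.exp (ε * r) *
      (γ * (x r ⬝ᵥ P₁.mulVec (x r) - x r ⬝ᵥ P₀.mulVec (x r))
        + 2 * (α r * (x r ⬝ᵥ P₁.mulVec ((Amat r).mulVec (x r)))
          + (1 - α r) * (x r ⬝ᵥ P₀.mulVec ((Amat r).mulVec (x r))))
        + ε * (α r * (x r ⬝ᵥ P₁.mulVec (x r)) + (1 - α r) * (x r ⬝ᵥ P₀.mulVec (x r))))) r := by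
    intro r
    have he : HasDerivAt (fun r => Real.exp (ε * r)) (Real.exp (ε * r) * (ε * 1)) r :=
      ((hasDerivAt_id r).const_mul ε).exp
    have hVd := ((hα r).mul ((hx r).quadForm hs₁)).add
      (((hα r).const_sub 1).mul ((hx r).quadForm hs₀))
    refine (he.mul hVd).congr_deriv ?_
    simp only [Pi.add_apply, Pi.mul_apply]
    ring
  have hanti : AntitoneOn (fun r => Real.exp (ε * r) * V r) S := by
    refine antitoneOn_of_deriv_nonpos hS
      (fun r _ => (hderiv r).continuousAt.continuousWithinAt)
      (fun r _ => (hderiv r).differentiableAt.differentiableWithinAt) fun r hr => ?_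
    rw [(hderiv r).deriv]
    exact mul_nonpos_of_nonneg_of_nonpos (Real.exp_pos _).le (hV r (interior_subset hr) (x r))
  have hdec : Real.exp (ε * u) * V u ≤ Real.exp (ε * s) * V s := hanti hs hu hsu
  have hsq : x u ⬝ᵥ x u ≤ (M / m) * Real.exp (-(ε / 2) * (u - s)) ^ 2 * (x s ⬝ᵥ x s) := by
    have hexp : Real.exp (ε * u) * Real.exp (-(ε / 2) * (u - s)) ^ 2 = Real.exp (ε * s) := by
      rw [← Real.exp_nat_mul, ← Real.exp_add]; congr 1; push_cast; ring
    have h1 : Real.exp (ε * u) * (m * (x u ⬝ᵥ x u)) ≤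
        Real.exp (ε * u) * (Real.exp (-(ε / 2) * (u - s)) ^ 2 * (M * (x s ⬝ᵥ x s))) := by
      rw [← mul_assoc (Real.exp (ε * u)) (_ ^ 2), hexp]
      exact (mul_le_mul_of_nonneg_left (hlow u hu) (Real.exp_pos _).le).trans
        (hdec.trans (mul_le_mul_of_nonneg_left (hup s hs) (Real.exp_pos _).le))
    have h2 := le_of_mul_le_mul_left h1 (Real.exp_pos _)
    rw [mul_comm m, ← le_div_iff₀ hmpos] at h2
    refine h2.trans (le_of_eq ?_)
    ring
  calc Real.sqrt (x u ⬝ᵥ x u)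
      ≤ Real.sqrt ((M / m) * Real.exp (-(ε / 2) * (u - s)) ^ 2 * (x s ⬝ᵥ x s)) :=
        Real.sqrt_le_sqrt hsq
    _ = Real.sqrt (M / m) * Real.exp (-(ε / 2) * (u - s)) * Real.sqrt (x s ⬝ᵥ x s) := by
        rw [Real.sqrt_mul (by positivity), Real.sqrt_mul (by positivity),
          Real.sqrt_sq (Real.exp_pos _).le]
    _ ≤ _ := by
        gcongr
        exact le_max_right _ _

lemma dotProduct_transpose_mulVec {n : ℕ} (X : Matrix (Fin n) (Fin n) ℝ) (v : Fin n → ℝ) :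
    v ⬝ᵥ Xᵀ.mulVec v = v ⬝ᵥ X.mulVec v := by
  rw [mulVec_transpose, dotProduct_comm, ← dotProduct_mulVec]

/-- The case of `ExpDecayOn.of_lyapunov` where the system and the Lyapunov matrix are both
constant, as on the two unbounded end intervals. -/
lemma ExpDecayOn.of_const {n : ℕ} {Amat : ℝ → Matrix (Fin n) (Fin n) ℝ} {S : Set ℝ}
    (hS : Convex ℝ S) {A P : Matrix (Fin n) (Fin n) ℝ} (hA : ∀ s ∈ S, Amat s = A)
    (hs : P.IsSymm) (hp : ∀ v : Fin n → ℝ, v ≠ 0 → 0 < v ⬝ᵥ P.mulVec v)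
    {ε : ℝ} (hε : 0 < ε)
    (hLMI : ∀ v : Fin n → ℝ, v ≠ 0 → v ⬝ᵥ (P * A + Aᵀ * P + ε • P).mulVec v < 0) :
    ExpDecayOn Amat S := by
  refine ExpDecayOn.of_lyapunov hS hs hs hp hp (α := fun _ => 0) hε
    (fun s => hasDerivAt_const s 0) (fun s _ => by simp) fun s hsS v => ?_
  by_cases hv : v = 0
  · simp [hv]
  have h := hLMI v hv
  have ht : Aᵀ * P = (P * A)ᵀ := by rw [transpose_mul, hs.eq]
  simp only [ht, add_mulVec, dotProduct_add, dotProduct_transpose_mulVec, smul_mulVec,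
    dotProduct_smul, smul_eq_mul, ← mulVec_mulVec] at h
  rw [hA s hsS]
  linarith

/-! ### Gluing the intervals -/

/-- **Nominal stability of piecewise LTV systems.**
If the nominal LMIs (the robust criterion with the uncertainty matrices `B_k` deleted)
are feasible, then the piecewise LTV system `ẋ = 𝒜(t) x` is globally uniformly
exponentially stable, in the Euclidean norm `‖v‖ = √(v ⬝ᵥ v)`. -/
theorem nominal_stability_piecewise_LTV (n N : ℕ)
    (t : ℕ → ℝ) (ht : ∀ k, k < N → t k < t (k + 1))
    (A : ℕ → Matrix (Fin n) (Fin n) ℝ)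
    (Amat : ℝ → Matrix (Fin n) (Fin n) ℝ)
    (hA0 : ∀ s, s ≤ t 0 → Amat s = A 0)
    (hAN : ∀ s, t N ≤ s → Amat s = A N)
    (hAk : ∀ k, 1 ≤ k → k ≤ N → ∀ s ∈ Set.Icc (t (k - 1)) (t k),
      Amat s = ((s - t (k - 1)) / (t k - t (k - 1))) • A k
        + (1 - (s - t (k - 1)) / (t k - t (k - 1))) • A (k - 1))
    (P : ℕ → Matrix (Fin n) (Fin n) ℝ)
    (hPsymm : ∀ k, k ≤ N → (P k).IsSymm)
    (hPpos : ∀ k, k ≤ N → ∀ x : Fin n → ℝ, x ≠ 0 → 0 < x ⬝ᵥ (P k).mulVec x)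
    (ε : ℕ → ℝ) (hε : ∀ k, k ≤ N → 0 < ε k)
    (hLMI0 : ∀ x : Fin n → ℝ, x ≠ 0 →
      x ⬝ᵥ (P 0 * A 0 + (A 0)ᵀ * P 0 + ε 0 • P 0).mulVec x < 0)
    (hLMIN : ∀ x : Fin n → ℝ, x ≠ 0 →
      x ⬝ᵥ (P N * A N + (A N)ᵀ * P N + ε N • P N).mulVec x < 0)
    (Ψ : ℕ → Matrix (Fin n) (Fin n) ℝ)
    (hΨsymm : ∀ k, 1 ≤ k → k ≤ N → (Ψ k).IsSymm)
    (hΨpos : ∀ k, 1 ≤ k → k ≤ N → ∀ x : Fin n → ℝ, x ≠ 0 → 0 < x ⬝ᵥ (Ψ k).mulVec x)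
    (hLMI : ∀ k, 1 ≤ k → k ≤ N →
      let γk : ℝ := 1 / (t k - t (k - 1))
      let M₂ := symS (P k * A k - (P k * A (k - 1) + P (k - 1) * A k) + P (k - 1) * A (k - 1))
      let M₁ := symS ((1/2 : ℝ) • (P k * A (k - 1) + P (k - 1) * A k) - P (k - 1) * A (k - 1))
        + (ε k / 2) • (P k - P (k - 1))
      let M₀ := symS (P (k - 1) * A (k - 1)) + γk • (P k - P (k - 1)) + ε k • P (k - 1)
      ∀ z : Fin n ⊕ Fin n → ℝ, z ≠ 0 →
        z ⬝ᵥ (Matrix.fromBlocks (M₂ - Ψ k) (M₁ + (1/2 : ℝ) • Ψ k)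
          ((M₁ + (1/2 : ℝ) • Ψ k)ᵀ) M₀).mulVec z < 0) :
    ∃ c lam : ℝ, 1 ≤ c ∧ 0 < lam ∧
      ∀ x : ℝ → Fin n → ℝ,
        (∀ s, HasDerivAt x ((Amat s).mulVec (x s)) s) →
        ∀ s u : ℝ, s ≤ u →
          Real.sqrt (x u ⬝ᵥ x u) ≤
            c * Real.exp (-lam * (u - s)) * Real.sqrt (x s ⬝ᵥ x s) := by
  have hall : ∀ k, k ≤ N → ExpDecayOn Amat (Set.Iic (t k)) := by
    intro k
    induction k with
    | zero =>
      intro _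
      exact ExpDecayOn.of_const (convex_Iic _) (fun s hs => hA0 s hs) (hPsymm 0 (Nat.zero_le _))
        (hPpos 0 (Nat.zero_le _)) (hε 0 (Nat.zero_le _)) hLMI0
    | succ k ih =>
      intro hk
      have hlt : t k < t (k + 1) := ht k hk
      have hd : 0 < t (k + 1) - t k := sub_pos.2 hlt
      have hpiece : ExpDecayOn Amat (Set.Icc (t k) (t (k + 1))) := by
        refine ExpDecayOn.of_lyapunov (convex_Icc _ _) (hPsymm k (by omega)) (hPsymm (k + 1) hk)
          (hPpos k (by omega)) (hPpos (k + 1) hk)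
          (α := fun s => (s - t k) / (t (k + 1) - t k)) (hε (k + 1) hk)
          (fun s => ((hasDerivAt_id s).sub_const (t k)).div_const _)
          (fun s hs => ⟨div_nonneg (by linarith [hs.1]) hd.le,
            (div_le_one hd).2 (by linarith [hs.2])⟩) fun s hs v => ?_
        by_cases hv : v = 0
        · simp [hv]
        have hAs := hAk (k + 1) (by omega) hk s hs
        have hα0 : 0 ≤ (s - t k) / (t (k + 1) - t k) := div_nonneg (by linarith [hs.1]) hd.le
        have hα1 : (s - t k) / (t (k + 1) - t k) ≤ 1 := (div_le_one hd).2 (by linarith [hs.2])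
        have hΨ := hΨpos (k + 1) (by omega) hk v hv
        simp only [Nat.add_sub_cancel] at hAs
        rw [hAs]
        set a := (s - t k) / (t (k + 1) - t k)
        have h := hLMI (k + 1) (by omega) hk (Sum.elim (a • v) v) (by
          intro h0
          exact hv (funext fun i => congrFun h0 (Sum.inr i)))
        simp only [Nat.add_sub_cancel, fromBlocks_mulVec, Sum.elim_comp_inl, Sum.elim_comp_inr,
          sumElim_dotProduct_sumElim, symS, add_mulVec, sub_mulVec, transpose_add, transpose_sub,
          transpose_transpose, smul_mulVec, mulVec_smul, transpose_smul, dotProduct_add,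
          dotProduct_sub, dotProduct_smul, smul_dotProduct, smul_eq_mul,
          dotProduct_transpose_mulVec, ← mulVec_mulVec] at h
        simp only [add_mulVec, mulVec_add, smul_mulVec, mulVec_smul, dotProduct_add,
          dotProduct_smul, smul_eq_mul]
        -- what remains differs from `h` exactly by the term `a (1 - a) vᵀ Ψ v`
        have hψ := mul_nonneg (mul_nonneg hα0 (sub_nonneg.2 hα1)) hΨ.le
        linarith
      have := (ih (by omega)).union hpiece (a := t k) (Set.mem_Iic.2 le_rfl) ⟨le_rfl, hlt.le⟩
        subset_rfl (fun s hs => hs.1)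
      rwa [Set.Iic_union_Icc_eq_Iic hlt.le] at this
  have htail : ExpDecayOn Amat (Set.Ici (t N)) :=
    ExpDecayOn.of_const (convex_Ici _) (fun s hs => hAN s hs) (hPsymm N le_rfl)
      (hPpos N le_rfl) (hε N le_rfl) hLMIN
  have hline := (hall N le_rfl).union htail (a := t N) (Set.mem_Iic.2 le_rfl)
    (Set.mem_Ici.2 le_rfl) subset_rfl subset_rfl
  rw [Set.Iic_union_Ici] at hline
  obtain ⟨c, lam, hc, hlam, h⟩ := hline
  exact ⟨c, lam, hc, hlam, fun x hx s u hsu => h x hx s trivial u trivial hsu⟩
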